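/- If DC holds and L_3 is finite, then for every integer k ≥ 3 the sequence r ↦ R_r(k)^{1/r} / R_r(k−1)^{1/r} converges to the finite real number L_k / L_{k−1}, and this limit is strictly greater than 1. -/

import Mathlib

open Filter Topology
open scoped ENNReal

/-- `N` has the Ramsey property for the tuple `k`: every `r`-coloring of the
edges of the complete graph on `N` vertices admits a color `i` and a set of
`k i` vertices all of whose connecting edges have color `i`. -/
def ramseyProp {r : ℕ} (k : Fin r → ℕ) (N : ℕ) : Prop :=
  ∀ c : Sym2 (Fin N) → Fin r, ∃ i : Fin r, ∃ S : Finset (Fin N),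
    S.card = k i ∧ ∀ u ∈ S, ∀ v ∈ S, u ≠ v → c s(u, v) = i

/-- The multicolor Ramsey number `R(k 0, …, k (r-1))`: the least positive `N`
with the Ramsey property. -/
noncomputable def multiRamsey {r : ℕ} (k : Fin r → ℕ) : ℕ :=
  sInf {N | 0 < N ∧ ramseyProp k N}

/-- The diagonal multicolor Ramsey number `R_r(k)`. -/
noncomputable def diagRamsey (r k : ℕ) : ℕ :=
  multiRamsey (fun _ : Fin r => k)

/-- DC, the "decreasing conjecture". -/
def DC : Prop :=
  ∀ (r : ℕ), 2 ≤ r → ∀ k : Fin r → ℕ, (∀ l, 2 ≤ k l) →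
    ∀ i j : Fin r, i ≠ j → 3 ≤ k i → k i ≤ k j →
      multiRamsey (fun l => if l = i then k i - 1 else if l = j then k j + 1 else k l)
        ≤ multiRamsey k

/-- `V` has the Ramsey property for the tuple `k`, for arbitrary types of vertices and colors. -/
def Arrows {ι : Type} (k : ι → ℕ) (V : Type) : Prop :=
  ∀ c : Sym2 V → ι, ∃ i : ι, ∃ S : Finset V,
    S.card = k i ∧ ∀ u ∈ S, ∀ v ∈ S, u ≠ v → c s(u, v) = i

/-- The Ramsey number of a tuple indexed by an arbitrary type of colors. -/
noncomputable def arrowNumber {ι : Type} (k : ι → ℕ) : ℕ :=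
  sInf {N | 0 < N ∧ Arrows k (Fin N)}

theorem multiRamsey_eq_arrowNumber {r : ℕ} (k : Fin r → ℕ) : multiRamsey k = arrowNumber k := rfl

theorem Arrows.of_injective {ι V W : Type} {k : ι → ℕ} (h : Arrows k V) (f : V → W)
    (hf : Function.Injective f) : Arrows k W := by
  intro c
  obtain ⟨i, S, hS, hc⟩ := h (fun e => c (e.map f))
  refine ⟨i, S.map ⟨f, hf⟩, by simpa using hS, ?_⟩
  intro u hu v hv huv
  simp only [Finset.mem_map, Function.Embedding.coeFn_mk] at hu hv
  obtain ⟨a, ha, rfl⟩ := hu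
  obtain ⟨b, hb, rfl⟩ := hv
  simpa using hc a ha b hb (fun hab => huv (by rw [hab]))

theorem Arrows.comp_equiv {ι κ V : Type} {k : ι → ℕ} (h : Arrows k V) (e : κ ≃ ι) :
    Arrows (k ∘ e) V := by
  intro c
  obtain ⟨i, S, hS, hc⟩ := h (fun x => e (c x))
  refine ⟨e.symm i, S, by simpa using hS, ?_⟩
  intro u hu v hv huv
  rw [Equiv.eq_symm_apply]
  exact hc u hu v hv huv

theorem arrows_comp_equiv_iff {ι κ V : Type} {k : ι → ℕ} (e : κ ≃ ι) :
    Arrows (k ∘ e) V ↔ Arrows k V := by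
  refine ⟨fun h => ?_, fun h => h.comp_equiv e⟩
  have := h.comp_equiv e.symm
  rwa [Function.comp_assoc, Equiv.self_comp_symm, Function.comp_id] at this

theorem arrowNumber_comp_equiv {ι κ : Type} (k : ι → ℕ) (e : κ ≃ ι) :
    arrowNumber (k ∘ e) = arrowNumber k := by
  simp only [arrowNumber, arrows_comp_equiv_iff]

/-- Ramsey's theorem for finitely many colors. -/
theorem exists_arrows {ι : Type} [Fintype ι] (k : ι → ℕ) :
    ∃ N : ℕ, ∀ (V : Type) [Fintype V], N < Fintype.card V → Arrows k V := by
  classical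
  induction hn : ∑ i, k i using Nat.strong_induction_on generalizing k with
  | _ n ih =>
  by_cases h0 : ∃ i, k i = 0
  · obtain ⟨i, hi⟩ := h0
    exact ⟨0, fun V _ _ c => ⟨i, ∅, by simp [hi], by simp⟩⟩
  push Not at h0
  have hstep : ∀ i, ∃ N : ℕ, ∀ (V : Type) [Fintype V], N < Fintype.card V →
      Arrows (Function.update k i (k i - 1)) V := by
    intro i
    refine ih _ ?_ (Function.update k i (k i - 1)) rfl
    rw [← hn]
    refine Finset.sum_lt_sum (fun j _ => ?_) ⟨i, Finset.mem_univ i, ?_⟩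
    · by_cases hj : j = i
      · subst hj; simp
      · simp [hj]
    · have := h0 i
      simp only [Function.update_self]
      omega
  choose N hN using hstep
  refine ⟨∑ i, (N i + 1), fun V _ hV c => ?_⟩
  have : Nonempty V := Fintype.card_pos_iff.1 (by omega)
  obtain ⟨v⟩ := this
  obtain ⟨i, hi⟩ : ∃ i, N i < ((Finset.univ.erase v).filter (fun w => c s(v, w) = i)).card := by
    by_contra! hcon
    have hcard := Finset.card_eq_sum_card_fiberwise (s := Finset.univ.erase v)
      (t := Finset.univ) (f := fun w => c s(v, w)) (by simp [Set.MapsTo])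
    rw [Finset.card_erase_of_mem (Finset.mem_univ v), Finset.card_univ] at hcard
    have hle := Finset.sum_le_sum (s := Finset.univ) (fun i _ => hcon i)
    have hlt : ∑ i, N i < ∑ i, (N i + 1) :=
      Finset.sum_lt_sum_of_nonempty ⟨c s(v, v), Finset.mem_univ _⟩ (fun i _ => Nat.lt_succ_self _)
    omega
  obtain ⟨j, S, hS, hc⟩ := hN i {w // w ∈ (Finset.univ.erase v).filter (fun w => c s(v, w) = i)}
    (by simpa only [Fintype.card_coe] using hi) (fun e => c (e.map Subtype.val))
  have hclique : ∀ u ∈ S.map (Function.Embedding.subtype _), ∀ w ∈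
      S.map (Function.Embedding.subtype _), u ≠ w → c s(u, w) = j := by
    intro u hu w hw huw
    simp only [Finset.mem_map, Function.Embedding.coe_subtype] at hu hw
    obtain ⟨a, ha, rfl⟩ := hu
    obtain ⟨b, hb, rfl⟩ := hw
    simpa using hc a ha b hb (fun hab => huw (by rw [hab]))
  have hmem : ∀ u ∈ S.map (Function.Embedding.subtype _), u ≠ v ∧ c s(v, u) = i := by
    intro u hu
    simp only [Finset.mem_map, Function.Embedding.coe_subtype] at hu
    obtain ⟨a, -, rfl⟩ := hu
    have ha := a.2
    rw [Finset.mem_filter, Finset.mem_erase] at ha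
    exact ⟨ha.1.1, ha.2⟩
  by_cases hj : j = i
  · subst hj
    refine ⟨j, insert v (S.map (Function.Embedding.subtype _)), ?_, ?_⟩
    · rw [Finset.card_insert_of_notMem (fun h => (hmem v h).1 rfl), Finset.card_map, hS]
      have := h0 j
      simp only [Function.update_self]
      omega
    · intro u hu w hw huw
      rw [Finset.mem_insert] at hu hw
      rcases hu with rfl | hu <;> rcases hw with rfl | hw
      · exact absurd rfl huw
      · exact (hmem w hw).2
      · rw [Sym2.eq_swap]; exact (hmem u hu).2
      · exact hclique u hu w hw huw
  · exact ⟨j, S.map (Function.Embedding.subtype _), by simpa [hj] using hS, hclique⟩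

theorem arrowNumber_spec {ι : Type} [Fintype ι] (k : ι → ℕ) :
    0 < arrowNumber k ∧ Arrows k (Fin (arrowNumber k)) := by
  obtain ⟨N, hN⟩ := exists_arrows k
  exact Nat.sInf_mem (s := {N | 0 < N ∧ Arrows k (Fin N)})
    ⟨N + 1, Nat.succ_pos N, hN _ (by simp)⟩

theorem card_lt_arrowNumber {ι V : Type} [Fintype ι] [Fintype V] {k : ι → ℕ}
    (h : ¬ Arrows k V) : Fintype.card V < arrowNumber k := by
  by_contra! hle
  refine h ((arrowNumber_spec k).2.of_injective
    ((Fintype.equivFin V).symm ∘ Fin.castLE hle) ?_)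
  exact (Fintype.equivFin V).symm.injective.comp (Fin.castLE_injective hle)

theorem not_arrows_pred {ι : Type} [Fintype ι] {k : ι → ℕ} (hk : ∀ i, 0 < k i) :
    ¬ Arrows k (Fin (arrowNumber k - 1)) := by
  intro h
  have hpos := (arrowNumber_spec k).1
  rcases Nat.eq_zero_or_pos (arrowNumber k - 1) with h0 | h0
  · rw [h0] at h
    obtain ⟨i, S, hS, -⟩ := h (fun e => isEmptyElim e)
    have := hk i
    rw [← hS, Finset.eq_empty_of_isEmpty S] at this
    simp at this
  · have : arrowNumber k ≤ arrowNumber k - 1 := Nat.sInf_le ⟨h0, h⟩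
    omega

theorem not_arrows_prod {ι κ V W : Type} {k : ι → ℕ} {l : κ → ℕ}
    (hV : ¬ Arrows k V) (hW : ¬ Arrows l W) : ¬ Arrows (Sum.elim k l) (V × W) := by
  classical
  simp only [Arrows, not_forall] at hV hW
  obtain ⟨c, hc⟩ := hV
  obtain ⟨d, hd⟩ := hW
  intro h
  obtain ⟨i, S, hS, hmono⟩ := h (fun e => if (e.map Prod.fst).IsDiag
    then Sum.inr (d (e.map Prod.snd)) else Sum.inl (c (e.map Prod.fst)))
  simp only [Sym2.map_mk, Sym2.mk_isDiag_iff] at hmono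
  rcases i with i | i
  · have hS' : ∀ u ∈ S, ∀ v ∈ S, u ≠ v → u.1 ≠ v.1 ∧ c s(u.1, v.1) = i := by
      intro u hu v hv huv
      have := hmono u hu v hv huv
      split_ifs at this with hdiag
      exact ⟨hdiag, Sum.inl_injective this⟩
    refine hc ⟨i, S.image Prod.fst, ?_, ?_⟩
    · rw [Finset.card_image_of_injOn, hS, Sum.elim_inl]
      intro u hu v hv huv
      by_contra hne
      exact (hS' u hu v hv hne).1 huv
    · intro a ha b hb hab
      rw [Finset.mem_image] at ha hb
      obtain ⟨u, hu, rfl⟩ := ha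
      obtain ⟨v, hv, rfl⟩ := hb
      exact (hS' u hu v hv (fun huv => hab (by rw [huv]))).2
  · have hS' : ∀ u ∈ S, ∀ v ∈ S, u ≠ v → u.1 = v.1 ∧ d s(u.2, v.2) = i := by
      intro u hu v hv huv
      have := hmono u hu v hv huv
      split_ifs at this with hdiag
      exact ⟨hdiag, Sum.inr_injective this⟩
    refine hd ⟨i, S.image Prod.snd, ?_, ?_⟩
    · rw [Finset.card_image_of_injOn, hS, Sum.elim_inr]
      intro u hu v hv huv
      by_contra hne
      exact hne (Prod.ext (hS' u hu v hv hne).1 huv)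
    · intro a ha b hb hab
      rw [Finset.mem_image] at ha hb
      obtain ⟨u, hu, rfl⟩ := ha
      obtain ⟨v, hv, rfl⟩ := hb
      exact (hS' u hu v hv (fun huv => hab (by rw [huv]))).2

theorem arrowNumber_sum_elim {ι κ : Type} [Fintype ι] [Fintype κ] {k : ι → ℕ} {l : κ → ℕ}
    (hk : ∀ i, 0 < k i) (hl : ∀ i, 0 < l i) :
    (arrowNumber k - 1) * (arrowNumber l - 1) < arrowNumber (Sum.elim k l) := by
  simpa using card_lt_arrowNumber (not_arrows_prod (not_arrows_pred hk) (not_arrows_pred hl))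

theorem pow_lt_diagRamsey {r m : ℕ} (hr : 0 < r) : m ^ r < diagRamsey r (m + 1) := by
  classical
  have key : ¬ Arrows (fun _ : Fin r => m + 1) (Fin r → Fin m) := by
    intro h
    obtain ⟨i, S, hS, hmono⟩ := h (fun e =>
      if h : ∃ i : Fin r, ¬ (e.map (fun x : Fin r → Fin m => x i)).IsDiag then h.choose else ⟨0, hr⟩)
    have hinj : Set.InjOn (fun x : Fin r → Fin m => x i) S := by
      intro u hu v hv huv
      by_contra hne
      have hex : ∃ i : Fin r, ¬ (s(u, v).map (fun x : Fin r → Fin m => x i)).IsDiag := by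
        obtain ⟨j, hj⟩ := Function.ne_iff.1 hne
        exact ⟨j, by simpa using hj⟩
      have hi := hmono u hu v hv hne
      rw [dif_pos hex] at hi
      have hspec := hex.choose_spec
      rw [hi] at hspec
      exact hspec (by simpa using huv)
    have hle := Finset.card_le_univ (S.image (fun x => x i))
    rw [Finset.card_image_of_injOn hinj, hS, Fintype.card_fin] at hle
    exact Nat.not_succ_le_self m hle
  have h := card_lt_arrowNumber key
  rwa [Fintype.card_fun, Fintype.card_fin, Fintype.card_fin] at h

theorem diagRamsey_two_le {r : ℕ} : diagRamsey r 2 ≤ 2 := by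
  refine Nat.sInf_le ⟨two_pos, fun c => ⟨c s(0, 1), Finset.univ, by simp, ?_⟩⟩
  intro u _ v _ huv
  fin_cases u <;> fin_cases v
  · exact absurd rfl huv
  · rfl
  · exact congrArg c Sym2.eq_swap
  · exact absurd rfl huv

/-- The decreasing conjecture for tuples indexed by an arbitrary finite type. -/
theorem DC.arrowNumber_le (hDC : DC) {ι : Type} [Fintype ι] [DecidableEq ι] {k : ι → ℕ}
    (hk : ∀ l, 2 ≤ k l) {i j : ι} (hij : i ≠ j) (hi : 3 ≤ k i) (hle : k i ≤ k j) :
    arrowNumber (fun l => if l = i then k i - 1 else if l = j then k j + 1 else k l)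
      ≤ arrowNumber k := by
  have hcard : 2 ≤ Fintype.card ι := Fintype.one_lt_card_iff.2 ⟨i, j, hij⟩
  let e := Fintype.equivFin ι
  have h := hDC _ hcard (k ∘ e.symm) (fun l => hk _) (e i) (e j) (by simpa using hij)
    (by simpa using hi) (by simpa using hle)
  rw [multiRamsey_eq_arrowNumber, multiRamsey_eq_arrowNumber, arrowNumber_comp_equiv,
    ← arrowNumber_comp_equiv _ e] at h
  convert h using 2
  funext l
  simp

theorem DC.arrowNumber_spread_le (hDC : DC) {α : Type} [Fintype α] {k : ℕ} (hk : 2 ≤ k) :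
    arrowNumber (Sum.elim (fun _ : α => k) (fun _ : α => k + 2))
      ≤ arrowNumber (fun _ : α ⊕ α => k + 1) := by
  classical
  suffices h : ∀ t : Finset α, arrowNumber (Sum.elim (fun a => if a ∈ t then k else k + 1)
      (fun a => if a ∈ t then k + 2 else k + 1)) ≤ arrowNumber (fun _ : α ⊕ α => k + 1) by
    simpa using h Finset.univ
  intro t
  induction t using Finset.induction_on with
  | empty =>
    apply le_of_eq
    congr 1
    funext x
    rcases x with x | x <;> simp
  | insert a t ha ih =>
    refine le_trans ?_ ih
    have h := hDC.arrowNumber_le (k := Sum.elim (fun a => if a ∈ t then k else k + 1)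
      (fun a => if a ∈ t then k + 2 else k + 1)) (i := Sum.inl a) (j := Sum.inr a)
      (by rintro (l | l) <;> simp only [Sum.elim_inl, Sum.elim_inr] <;> split_ifs <;> omega)
      (by simp) (by simp [ha]; omega) (by simp [ha])
    refine le_trans (le_of_eq ?_) h
    congr 1
    funext x
    rcases x with x | x <;> by_cases hx : x = a <;> simp [hx, ha]

theorem DC.diagRamsey_mul_le (hDC : DC) {k : ℕ} (hk : 2 ≤ k) {r : ℕ} (hr : 0 < r) :
    diagRamsey r k * diagRamsey r (k + 2) ≤ 4 * diagRamsey (2 * r) (k + 1) := by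
  have hspread := hDC.arrowNumber_spread_le (α := Fin r) hk
  have hprod := arrowNumber_sum_elim (k := fun _ : Fin r => k) (l := fun _ : Fin r => k + 2)
    (fun _ => by omega) (fun _ => by omega)
  have hdiag : arrowNumber (fun _ : Fin r ⊕ Fin r => k + 1) = diagRamsey (2 * r) (k + 1) :=
    arrowNumber_comp_equiv (fun _ : Fin (2 * r) => k + 1)
      (finSumFinEquiv.trans (finCongr (two_mul r).symm))
  have hlow : ∀ m, 2 ≤ m → 2 ≤ diagRamsey r m := by
    intro m hm
    have h := pow_lt_diagRamsey (m := m - 1) hr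
    rw [Nat.sub_add_cancel (by omega)] at h
    have := Nat.one_le_pow r (m - 1) (by omega)
    omega
  have h1 := hlow k hk
  have h2 := hlow (k + 2) (by omega)
  rw [hdiag] at hspread
  change (diagRamsey r k - 1) * (diagRamsey r (k + 2) - 1) < _ at hprod
  obtain ⟨a, ha⟩ := Nat.exists_eq_add_of_le h1
  obtain ⟨b, hb⟩ := Nat.exists_eq_add_of_le h2
  rw [ha, hb] at hprod ⊢
  have h3 : (1 + a) * (1 + b) < diagRamsey (2 * r) (k + 1) := by
    refine lt_of_lt_of_le ?_ hspread
    rwa [show 2 + a - 1 = 1 + a by omega, show 2 + b - 1 = 1 + b by omega] at hprod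
  nlinarith

theorem natCast_le_of_tendsto_diagRamsey {m : ℕ} {ℓ : ℝ≥0∞}
    (h : Tendsto (fun r : ℕ => ((diagRamsey r (m + 1) : ℝ≥0∞)) ^ (1 / (r : ℝ))) atTop (𝓝 ℓ)) :
    (m : ℝ≥0∞) ≤ ℓ := by
  refine ge_of_tendsto h ?_
  filter_upwards [eventually_gt_atTop 0] with r hr
  have hle : (m : ℝ≥0∞) ^ r ≤ diagRamsey r (m + 1) := by
    exact_mod_cast (pow_lt_diagRamsey hr).le
  have hr' : (r : ℝ) ≠ 0 := by positivity
  calc (m : ℝ≥0∞) = ((m : ℝ≥0∞) ^ r) ^ (1 / (r : ℝ)) := by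
        rw [← ENNReal.rpow_natCast, ← ENNReal.rpow_mul, mul_one_div_cancel hr', ENNReal.rpow_one]
    _ ≤ _ := ENNReal.rpow_le_rpow hle (by positivity)

theorem ne_top_of_tendsto_diagRamsey_two {ℓ : ℝ≥0∞}
    (h : Tendsto (fun r : ℕ => ((diagRamsey r 2 : ℝ≥0∞)) ^ (1 / (r : ℝ))) atTop (𝓝 ℓ)) :
    ℓ ≠ ⊤ := by
  have hle : ℓ ≤ 2 := by
    refine le_of_tendsto h ?_
    filter_upwards [eventually_gt_atTop 0] with r hr
    have h2 : (diagRamsey r 2 : ℝ≥0∞) ≤ 2 := by exact_mod_cast diagRamsey_two_le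
    have hr' : (1 : ℝ) ≤ r := by exact_mod_cast hr
    calc ((diagRamsey r 2 : ℝ≥0∞)) ^ (1 / (r : ℝ)) ≤ 2 ^ (1 / (r : ℝ)) :=
          ENNReal.rpow_le_rpow h2 (by positivity)
      _ ≤ 2 ^ (1 : ℝ) := ENNReal.rpow_le_rpow_of_exponent_le (by norm_num)
          ((div_le_one (by positivity)).2 hr')
      _ = 2 := ENNReal.rpow_one 2
  exact ne_top_of_le_ne_top (by norm_num) hle

/-- Under DC the sequence of limits `L` is log-concave. -/
theorem DC.limit_mul_le (hDC : DC) {L : ℕ → ℝ≥0∞}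
    (hL : ∀ j, 2 ≤ j →
      Tendsto (fun r : ℕ => ((diagRamsey r j : ℝ≥0∞)) ^ (1 / (r : ℝ))) atTop (𝓝 (L j)))
    {k : ℕ} (hk : 2 ≤ k) : L k * L (k + 2) ≤ L (k + 1) ^ 2 := by
  have hpos : ∀ j, 2 ≤ j → L j ≠ 0 := by
    intro j hj
    obtain ⟨m, rfl⟩ : ∃ m, j = m + 1 := ⟨j - 1, by omega⟩
    have := natCast_le_of_tendsto_diagRamsey (hL (m + 1) hj)
    have hm : (m : ℝ≥0∞) ≠ 0 := by
      simp only [ne_eq, Nat.cast_eq_zero]; omega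
    exact fun h0 => hm (le_antisymm (h0 ▸ this) zero_le)
  have hleft := ENNReal.Tendsto.mul (hL k hk) (Or.inl (hpos k hk)) (hL (k + 2) (by omega))
    (Or.inl (hpos (k + 2) (by omega)))
  have hdouble : Tendsto (fun r : ℕ => 2 * r) atTop atTop :=
    tendsto_id.const_mul_atTop' two_pos
  have hfour : Tendsto (fun r : ℕ => (4 : ℝ≥0∞) ^ (1 / (r : ℝ))) atTop (𝓝 1) := by
    have hexp : Tendsto (fun r : ℕ => ENNReal.ofReal ((4 : ℝ) ^ (1 / (r : ℝ)))) atTop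
        (𝓝 (ENNReal.ofReal ((4 : ℝ) ^ (0 : ℝ)))) :=
      ENNReal.tendsto_ofReal (tendsto_const_nhds.rpow tendsto_one_div_atTop_nhds_zero_nat
        (Or.inl (by norm_num)))
    simpa [← ENNReal.ofReal_rpow_of_pos] using hexp
  have hsq := ((ENNReal.continuous_pow 2).tendsto (L (k + 1))).comp
    ((hL (k + 1) (by omega)).comp hdouble)
  have hright := ENNReal.Tendsto.mul hfour (Or.inl one_ne_zero) hsq
    (Or.inr ENNReal.one_ne_top)
  rw [one_mul] at hright
  refine le_of_tendsto_of_tendsto hleft hright ?_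
  filter_upwards [eventually_gt_atTop 0] with r hr
  have hle : (diagRamsey r k : ℝ≥0∞) * diagRamsey r (k + 2)
      ≤ 4 * diagRamsey (2 * r) (k + 1) := by
    exact_mod_cast hDC.diagRamsey_mul_le hk hr
  have hr' : (0 : ℝ) ≤ 1 / r := by positivity
  have hexp : 1 / (r : ℝ) = 1 / ((2 * r : ℕ) : ℝ) * (2 : ℕ) := by
    have : (r : ℝ) ≠ 0 := by positivity
    push_cast
    field_simp
  calc _ = ((diagRamsey r k : ℝ≥0∞) * diagRamsey r (k + 2)) ^ (1 / (r : ℝ)) :=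
        (ENNReal.mul_rpow_of_nonneg _ _ hr').symm
    _ ≤ (4 * diagRamsey (2 * r) (k + 1)) ^ (1 / (r : ℝ)) := ENNReal.rpow_le_rpow hle hr'
    _ = 4 ^ (1 / (r : ℝ)) * (diagRamsey (2 * r) (k + 1) : ℝ≥0∞) ^ (1 / (r : ℝ)) :=
        ENNReal.mul_rpow_of_nonneg _ _ hr'
    _ = _ := by
        congr 1
        rw [hexp, ENNReal.rpow_mul, ENNReal.rpow_natCast]
        rfl

/-- An unbounded positive log-concave sequence is strictly increasing. -/
theorem lt_succ_of_logConcave {x : ℕ → ℝ} {a : ℕ} (hpos : ∀ n, a ≤ n → 0 < x n)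
    (hconc : ∀ n, a ≤ n → x n * x (n + 2) ≤ x (n + 1) ^ 2)
    (hunb : ∀ B : ℝ, ∀ m, ∃ n, m ≤ n ∧ B < x n) {n : ℕ} (hn : a ≤ n) : x n < x (n + 1) := by
  by_contra! hle
  have hanti : ∀ m, n ≤ m → x (m + 1) ≤ x m := by
    intro m hm
    induction m, hm using Nat.le_induction with
    | base => exact hle
    | succ m hm ih =>
      have h0 := hpos m (hn.trans hm)
      have h1 := hpos (m + 1) (by omega)
      have h2 := hconc m (hn.trans hm)
      have h3 : 0 < x (m + 2) := hpos (m + 2) (by omega)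
      change x (m + 2) ≤ x (m + 1)
      nlinarith
  have hbound : ∀ m, n ≤ m → x m ≤ x n := by
    intro m hm
    induction m, hm using Nat.le_induction with
    | base => exact le_rfl
    | succ m hm ih => exact (hanti m hm).trans ih
  obtain ⟨m, hm, hlt⟩ := hunb (x n) n
  exact absurd (hbound m hm) (not_le.2 hlt)

/-- if DC holds and `L_3` is finite, then for every `k ≥ 3` the real
sequence `r ↦ R_r(k)^{1/r} / R_r(k−1)^{1/r}` converges to the finite real number
`L_k / L_{k−1}`, and this limit is strictly greater than `1`.
Here `L j` is the limit of `r ↦ R_r(j)^{1/r}` in `[0, ∞]`. -/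
theorem stmt12 (hDC : DC) (L : ℕ → ℝ≥0∞)
    (hL : ∀ j, 2 ≤ j →
      Tendsto (fun r : ℕ => ((diagRamsey r j : ℝ≥0∞)) ^ (1 / (r : ℝ))) atTop (𝓝 (L j)))
    (h3 : L 3 ≠ ⊤) (k : ℕ) (hk : 3 ≤ k) :
    L (k - 1) ≠ ⊤ ∧ L k ≠ ⊤ ∧
    Tendsto
      (fun r : ℕ =>
        ((diagRamsey r k : ℝ) ^ (1 / (r : ℝ))) / ((diagRamsey r (k - 1) : ℝ) ^ (1 / (r : ℝ))))
      atTop (𝓝 ((L k).toReal / (L (k - 1)).toReal)) ∧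
    1 < (L k).toReal / (L (k - 1)).toReal := by
  have hge : ∀ j : ℕ, 1 ≤ j → (j : ℝ≥0∞) ≤ L (j + 1) := fun j hj =>
    natCast_le_of_tendsto_diagRamsey (hL (j + 1) (by omega))
  have htop : ∀ j, 2 ≤ j → L j ≠ ⊤ ∧ L (j + 1) ≠ ⊤ := by
    intro j hj
    induction j, hj using Nat.le_induction with
    | base => exact ⟨ne_top_of_tendsto_diagRamsey_two (hL 2 le_rfl), h3⟩
    | succ j hj ih =>
      refine ⟨ih.2, ne_top_of_le_ne_top (ENNReal.pow_ne_top (n := 2) ih.2) ?_⟩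
      have hone : 1 ≤ L j := by
        obtain ⟨m, rfl⟩ : ∃ m, j = m + 1 := ⟨j - 1, by omega⟩
        exact le_trans (by exact_mod_cast (by omega : 1 ≤ m)) (hge m (by omega))
      calc L (j + 2) = 1 * L (j + 2) := (one_mul _).symm
        _ ≤ L j * L (j + 2) := by gcongr
        _ ≤ L (j + 1) ^ 2 := hDC.limit_mul_le hL hj
  have hreal : ∀ j : ℕ, 1 ≤ j → (j : ℝ) ≤ (L (j + 1)).toReal := by
    intro j hj
    simpa using ENNReal.toReal_mono (htop (j + 1) (by omega)).1 (hge j hj)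
  have hpos : ∀ j, 2 ≤ j → 0 < (L j).toReal := by
    intro j hj
    obtain ⟨m, rfl⟩ : ∃ m, j = m + 1 := ⟨j - 1, by omega⟩
    refine lt_of_lt_of_le ?_ (hreal m (by omega))
    exact_mod_cast (by omega : 0 < m)
  have hconc : ∀ j, 2 ≤ j →
      (L j).toReal * (L (j + 2)).toReal ≤ (L (j + 1)).toReal ^ 2 := by
    intro j hj
    rw [← ENNReal.toReal_mul, ← ENNReal.toReal_pow]
    exact ENNReal.toReal_mono (ENNReal.pow_ne_top (htop j hj).2) (hDC.limit_mul_le hL hj)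
  have hunb : ∀ B : ℝ, ∀ m, ∃ n, m ≤ n ∧ B < (L n).toReal := by
    intro B m
    obtain ⟨n, hn⟩ := exists_nat_gt B
    refine ⟨max n (max m 1) + 1, by omega, hn.trans_le (le_trans ?_ (hreal _ (by omega)))⟩
    exact_mod_cast le_max_left n _
  have hlim : ∀ j, 2 ≤ j → Tendsto (fun r : ℕ => (diagRamsey r j : ℝ) ^ (1 / (r : ℝ))) atTop
      (𝓝 (L j).toReal) := by
    intro j hj
    refine ((ENNReal.tendsto_toReal (htop j hj).1).comp (hL j hj)).congr fun r => ?_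
    simp [← ENNReal.toReal_rpow]
  obtain ⟨k, rfl⟩ : ∃ m, k = m + 1 := ⟨k - 1, by omega⟩
  have hk2 : 2 ≤ k := by omega
  rw [Nat.add_sub_cancel]
  refine ⟨(htop k hk2).1, (htop k hk2).2,
    (hlim (k + 1) (by omega)).div (hlim k hk2) (hpos k hk2).ne', ?_⟩
  rw [one_lt_div (hpos k hk2)]
  exact lt_succ_of_logConcave (x := fun j => (L j).toReal) hpos hconc hunb hk2
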